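/- Let A be a unital C*-algebra over ℂ and let a, b ∈ A be self-adjoint. The element a + i·1 is invertible (since the spectrum of a is real). If 0 < ε < 1 and ‖(a + i·1)⁻¹(a − b)‖ ≤ ε, then the following operator inequalities between positive elements hold: (1 + b²)⁻¹ ≤ (1 − ε)⁻² (1 + a²)⁻¹ and (1 + a²)⁻¹ ≤ (1 + ε)² (1 + b²)⁻¹. -/

import Mathlib

/-!
Put `u = a + i` and `v = b + i`, so that `u * star u = 1 + a²` and `v * star v = 1 + b²`. The
hypothesis says that `u⁻¹v = 1 - u⁻¹(u - v)` is within `ε` of `1`, hence `‖u⁻¹v‖ ≤ 1 + ε` and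
`‖v⁻¹u‖ ≤ (1 - ε)⁻¹`. Since `u⁻¹ = (u⁻¹v)v⁻¹` and `v⁻¹ = (v⁻¹u)u⁻¹`, both inequalities are cases of
`star (wx) * (wx) ≤ ‖w‖² • (star x * x)`.
-/

open scoped Ring

section NormedRing

variable {R : Type*} [NormedRing R] [NormOneClass R] {w x : R} {ε : ℝ}

theorem norm_le_one_add_of_norm_one_sub_le (h : ‖1 - w‖ ≤ ε) : ‖w‖ ≤ 1 + ε :=
  calc ‖w‖ ≤ ‖(1 : R)‖ + ‖1 - w‖ := norm_le_norm_add_norm_sub 1 w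
    _ ≤ 1 + ε := by rw [norm_one]; gcongr

theorem norm_le_inv_one_sub_of_mul_eq_one (hwx : w * x = 1) (h : ‖1 - w‖ ≤ ε) (hε : ε < 1) :
    ‖x‖ ≤ (1 - ε)⁻¹ := by
  have hx : x = 1 + (1 - w) * x := by rw [sub_mul, hwx, one_mul, add_sub_cancel]
  have hnorm : ‖x‖ ≤ 1 + ε * ‖x‖ :=
    calc ‖x‖ = ‖1 + (1 - w) * x‖ := congrArg norm hx
      _ ≤ ‖(1 : R)‖ + ‖(1 - w) * x‖ := norm_add_le _ _
      _ ≤ 1 + ‖1 - w‖ * ‖x‖ := by rw [norm_one]; gcongr; exact norm_mul_le _ _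
      _ ≤ 1 + ε * ‖x‖ := by gcongr
  rw [← one_div, le_div_iff₀ (sub_pos.mpr hε)]
  linarith

end NormedRing

theorem one_sub_inv_mul_eq_inv_mul_sub {R : Type*} [Ring R] (u v : Rˣ) :
    1 - (↑(u⁻¹ * v) : R) = ↑u⁻¹ * (↑u - ↑v) := by
  rw [mul_sub, Units.inv_mul, Units.val_mul]

theorem star_mul_self_mul_le_sq_smul {A : Type*} [NonUnitalCStarAlgebra A] [PartialOrder A]
    [StarOrderedRing A] {w : A} {r : ℝ} (hw : ‖w‖ ≤ r) (x : A) :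
    star (w * x) * (w * x) ≤ r ^ 2 • (star x * x) :=
  calc star (w * x) * (w * x) = star x * (star w * w) * x := by simp only [star_mul, mul_assoc]
    _ ≤ ‖star w * w‖ • (star x * x) := CStarAlgebra.star_left_conjugate_le_norm_smul
    _ ≤ r ^ 2 • (star x * x) := by
      rw [CStarRing.norm_star_mul_self, ← sq]
      gcongr
      exact star_mul_self_nonneg x

section UnitComparison

variable {A : Type*} [CStarAlgebra A] [PartialOrder A] [StarOrderedRing A] {u v : Aˣ} {ε : ℝ}

theorem star_inv_mul_inv_le_one_add_sq_smul (h : ‖(↑u⁻¹ : A) * (↑u - ↑v)‖ ≤ ε) :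
    star (↑u⁻¹ : A) * ↑u⁻¹ ≤ (1 + ε) ^ 2 • (star (↑v⁻¹ : A) * ↑v⁻¹) := by
  nontriviality A
  rw [← one_sub_inv_mul_eq_inv_mul_sub] at h
  have hfactor : (↑(u⁻¹ * v) : A) * ↑v⁻¹ = ↑u⁻¹ := by rw [← Units.val_mul, mul_inv_cancel_right]
  simpa only [hfactor] using
    star_mul_self_mul_le_sq_smul (norm_le_one_add_of_norm_one_sub_le h) (↑v⁻¹ : A)

theorem star_inv_mul_inv_le_inv_one_sub_sq_smul (h : ‖(↑u⁻¹ : A) * (↑u - ↑v)‖ ≤ ε) (hε : ε < 1) :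
    star (↑v⁻¹ : A) * ↑v⁻¹ ≤ (1 - ε)⁻¹ ^ 2 • (star (↑u⁻¹ : A) * ↑u⁻¹) := by
  nontriviality A
  rw [← one_sub_inv_mul_eq_inv_mul_sub] at h
  have hinv : (↑(u⁻¹ * v) : A) * ↑(v⁻¹ * u) = 1 := by
    rw [← Units.val_mul, mul_assoc, mul_inv_cancel_left, inv_mul_cancel, Units.val_one]
  have hfactor : (↑(v⁻¹ * u) : A) * ↑u⁻¹ = ↑v⁻¹ := by rw [← Units.val_mul, mul_inv_cancel_right]
  simpa only [hfactor] using
    star_mul_self_mul_le_sq_smul (norm_le_inv_one_sub_of_mul_eq_one hinv h hε) (↑u⁻¹ : A)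

end UnitComparison

theorem add_I_smul_one_mul_star_self {A : Type*} [Ring A] [StarRing A] [Algebra ℂ A]
    [StarModule ℂ A] {a : A} (ha : IsSelfAdjoint a) :
    (a + Complex.I • 1) * star (a + Complex.I • 1) = 1 + a ^ 2 := by
  have hstar : star (a + Complex.I • (1 : A)) = a - Complex.I • 1 := by
    simp only [star_add, star_smul, star_one, ha.star_eq, RCLike.star_def, Complex.conj_I, neg_smul,
      sub_eq_add_neg]
  have hcomm : Commute a (Complex.I • (1 : A)) := (Commute.one_right a).smul_right Complex.I
  rw [hstar, ← hcomm.sq_sub_sq, smul_pow, Complex.I_sq, one_pow, neg_one_smul, sub_neg_eq_add,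
    add_comm]

section SelfAdjoint

variable {A : Type*} [CStarAlgebra A] {a : A}

theorem isUnit_add_smul_one_of_im_ne_zero (ha : IsSelfAdjoint a) {z : ℂ} (hz : z.im ≠ 0) :
    IsUnit (a + z • 1) := by
  have hmem : -z ∉ spectrum ℂ a := fun h ↦
    hz (by simpa only [Complex.neg_im, neg_eq_zero] using ha.im_eq_zero_of_mem_spectrum h)
  have hunit : IsUnit (-(algebraMap ℂ A (-z) - a)) := (spectrum.notMem_iff.mp hmem).neg
  rwa [neg_sub, map_neg, sub_neg_eq_add, Algebra.algebraMap_eq_smul_one] at hunit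

theorem isUnit_add_I_smul_one (ha : IsSelfAdjoint a) : IsUnit (a + Complex.I • 1) :=
  isUnit_add_smul_one_of_im_ne_zero ha (by rw [Complex.I_im]; exact one_ne_zero)

theorem ringInverse_one_add_sq (ha : IsSelfAdjoint a) :
    (1 + a ^ 2)⁻¹ʳ = star (a + Complex.I • 1)⁻¹ʳ * (a + Complex.I • 1)⁻¹ʳ := by
  rw [← add_I_smul_one_mul_star_self ha, Ring.inverse_mul (.inl (isUnit_add_I_smul_one ha)),
    Ring.inverse_star]

end SelfAdjoint

/-- **Resolvent comparison inequalities** (from the proof of Proposition A.4, C*-algebra case).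
For self-adjoint `a, b` in a unital C*-algebra, the element `a + i·1` is invertible, and if
`0 < ε < 1` and `‖(a + i·1)⁻¹ * (a − b)‖ ≤ ε`, then
`(1 + b²)⁻¹ ≤ (1 − ε)⁻² (1 + a²)⁻¹` and `(1 + a²)⁻¹ ≤ (1 + ε)² (1 + b²)⁻¹`. -/
theorem resolvent_comparison_of_norm_le
    {A : Type*} [CStarAlgebra A] [PartialOrder A] [StarOrderedRing A]
    (a b : A) (ha : IsSelfAdjoint a) (hb : IsSelfAdjoint b)
    (ε : ℝ) (hε₀ : 0 < ε) (hε₁ : ε < 1)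
    (hnorm : ‖Ring.inverse (a + Complex.I • 1) * (a - b)‖ ≤ ε) :
    IsUnit (a + Complex.I • 1) ∧
    Ring.inverse (1 + b ^ 2) ≤ ((((1 - ε)⁻¹ ^ 2 : ℝ) : ℂ)) • Ring.inverse (1 + a ^ 2) ∧
    Ring.inverse (1 + a ^ 2) ≤ ((((1 + ε) ^ 2 : ℝ) : ℂ)) • Ring.inverse (1 + b ^ 2) := by
  refine ⟨isUnit_add_I_smul_one ha, ?_⟩
  rw [ringInverse_one_add_sq ha, ringInverse_one_add_sq hb, Complex.coe_smul, Complex.coe_smul]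
  rw [← add_sub_add_right_eq_sub a b (Complex.I • 1)] at hnorm
  obtain ⟨u, hu⟩ := isUnit_add_I_smul_one ha
  obtain ⟨v, hv⟩ := isUnit_add_I_smul_one hb
  rw [← hu, ← hv, Ring.inverse_unit] at hnorm
  rw [← hu, ← hv, Ring.inverse_unit, Ring.inverse_unit]
  exact ⟨star_inv_mul_inv_le_inv_one_sub_sq_smul hnorm hε₁,
    star_inv_mul_inv_le_one_add_sq_smul hnorm⟩
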